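/- arXiv:1412.5792 — 4 statements merged into one kernel-verified Lean document; each statement's English description precedes it below -/
import Mathlib

section
/- Suppose ψ satisfies Assumption (P_{ρ1,ρ2,N}) and fix q ∈ (p1,p2). Then φ1 : [p1,q] → [0,s1], φ1(p) := (ψ(p)-ψ(p1))^{1/ρ1}, is a bijection from [p1,q] onto [0,s1] which is C^{N+1} on [p1,q] and whose inverse is C^{N+1} on [0,s1]; likewise φ2 : [q,p2] → [0,s2], φ2(p) := (ψ(p2)-ψ(p))^{1/ρ2}, is a bijection from [q,p2] onto [0,s2] (with φ2(p2)=0, φ2(q)=s2) which is C^{N+1} with C^{N+1} inverse. -/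
/-!
Write `F` for `ψ` on `[a, b]`, where `a` is the endpoint under consideration, so that
`F'(x) = (x - a)^(ρ-1) h(x)` with `h > 0` of class `C^N`. The substitution `t = a + (x - a) u` in
`F x - F a = ∫_a^x F'` gives `F x - F a = (x - a)^ρ J(x)` with
`J(x) = ∫_0^1 u^(ρ-1) h(a + (x - a) u) du` (`sub_eq_rpow_mul_average`). The function `J` is positive
and of class `C^N` by differentiation under the integral sign (`contDiff_weighted_average`).
Hence `φ(x) = (F x - F a)^(1/ρ) = (x - a) J(x)^(1/ρ)`. The powers of `x - a` cancel in the chain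
rule, leaving `φ' = (1/ρ) J^(1/ρ - 1) h`, which is positive and of class `C^N` up to and including
the endpoint `a`; thus `φ` is `C^(N+1)` although the factorization alone only gives `C^N`
(`diffeo_root`).

A function on `[a, b]` whose derivative is `C^N` and positive is a `C^(N+1)` diffeomorphism onto its
image (`diffeo_of_deriv_pos`). To avoid one-sided arguments at the endpoints, functions on a compact
interval are extended to all of `ℝ` with the same smoothness (`exists_contDiff_extension`); extending
the logarithm of the derivative keeps the extended derivative positive, so that the inverse function
theorem on `ℝ` applies.

The statement at the right endpoint `p2` follows from the one at the left endpoint, applied to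
`x ↦ -ψ(-x)` on `[-p2, -q]`.
-/

open Set Filter Topology

theorem contDiff_primitive {n : ℕ} {f : ℝ → ℝ} (hf : ContDiff ℝ n f) (a c : ℝ) :
    ContDiff ℝ ((n + 1 : ℕ)) (fun x => c + ∫ t in a..x, f t) ∧
      ∀ x, HasDerivAt (fun x => c + ∫ t in a..x, f t) (f x) x := by
  have hd : ∀ x, HasDerivAt (fun x => c + ∫ t in a..x, f t) (f x) x := fun x =>
    (intervalIntegral.integral_hasDerivAt_right (hf.continuous.intervalIntegrable _ _)
      (hf.continuous.stronglyMeasurableAtFilter _ _) hf.continuous.continuousAt).const_add c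
  refine ⟨?_, hd⟩
  push_cast
  rw [contDiff_succ_iff_deriv]
  refine ⟨fun x => (hd x).differentiableAt, by simp, ?_⟩
  rwa [funext fun x => (hd x).deriv]

/-- Fundamental theorem of calculus for a one-sided derivative at the endpoints: if the continuous
function `f` on `ℝ` restricts to the derivative of `φ` on `[a, b]`, the primitive of `f` is `φ`
there. -/
theorem eqOn_primitive {a b : ℝ} {φ f : ℝ → ℝ} (hf : Continuous f)
    (h : ∀ x ∈ Icc a b, HasDerivWithinAt φ (f x) (Icc a b) x) :
    EqOn (fun x => φ a + ∫ t in a..x, f t) φ (Icc a b) := by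
  have hf0 : ContDiff ℝ (0 : ℕ) f := contDiff_zero.2 hf
  have hd := (contDiff_primitive hf0 a (φ a)).2
  intro x hx
  refine eq_of_has_deriv_right_eq (a := a) (b := b) (f' := f)
    (fun y hy => (hd y).hasDerivWithinAt) (fun y hy => ?_)
    (fun y _ => (hd y).continuousAt.continuousWithinAt)
    (fun y hy => (h y hy).continuousWithinAt) (by simp) x hx
  exact ((h y ⟨hy.1, hy.2.le⟩).mono_of_mem_nhdsWithin (Icc_mem_nhdsGE_of_mem hy))

/-- A `C^n` function on a compact interval extends to a `C^n` function on `ℝ`: extend the `n`-th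
derivative by constants and integrate `n` times. -/
theorem exists_contDiff_extension {a b : ℝ} (hab : a < b) (n : ℕ) :
    ∀ h : ℝ → ℝ, ContDiffOn ℝ n h (Icc a b) → ∃ H : ℝ → ℝ, ContDiff ℝ n H ∧ EqOn H h (Icc a b) := by
  induction n with
  | zero =>
    intro h hh
    refine ⟨IccExtend hab.le ((Icc a b).domRestrict h), ?_, fun x hx => ?_⟩
    · have := (continuousOn_iff_continuous_domRestrict.1 hh.continuousOn).Icc_extend' (h := hab.le)
      exact contDiff_zero.2 this
    · rw [IccExtend_of_mem _ _ hx]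
      rfl
  | succ n ih =>
    intro h hh
    have hh' := hh
    push_cast at hh'
    rw [contDiffOn_succ_iff_derivWithin (uniqueDiffOn_Icc hab)] at hh'
    obtain ⟨H, hH, hHe⟩ := ih _ hh'.2.2
    refine ⟨_, (contDiff_primitive hH a (h a)).1, eqOn_primitive hH.continuous fun x hx => ?_⟩
    rw [hHe hx]
    exact (hh'.1 x hx).hasDerivWithinAt

/-- A function on `[a, b]` with positive derivative of class `C^n` is a `C^(n+1)` diffeomorphism
onto `[φ a, φ b]`. -/
theorem diffeo_of_deriv_pos {a b : ℝ} (hab : a < b) {n : ℕ} {φ d : ℝ → ℝ}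
    (hφ : ∀ x ∈ Icc a b, HasDerivWithinAt φ (d x) (Icc a b) x)
    (hd : ContDiffOn ℝ n d (Icc a b)) (hpos : ∀ x ∈ Icc a b, 0 < d x) :
    BijOn φ (Icc a b) (Icc (φ a) (φ b)) ∧ ContDiffOn ℝ (n + 1) φ (Icc a b) ∧
      ∃ g : ℝ → ℝ, ContDiffOn ℝ (n + 1) g (Icc (φ a) (φ b)) ∧
        InvOn g φ (Icc a b) (Icc (φ a) (φ b)) := by
  -- Extending `log d` rather than `d` makes the extended derivative `exp L` positive on all of `ℝ`.
  obtain ⟨L, hL, hLe⟩ := exists_contDiff_extension hab n (fun x => Real.log (d x))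
    (hd.log fun x hx => (hpos x hx).ne')
  have hE : ContDiff ℝ n (fun x => Real.exp (L x)) := hL.exp
  obtain ⟨hΦ, hΦd⟩ := contDiff_primitive hE a (φ a)
  have hΦe : EqOn (fun x => φ a + ∫ t in a..x, Real.exp (L t)) φ (Icc a b) := by
    refine eqOn_primitive hE.continuous fun x hx => ?_
    rw [hLe hx, Real.exp_log (hpos x hx)]
    exact hφ x hx
  set Φ : ℝ → ℝ := fun x => φ a + ∫ t in a..x, Real.exp (L t)
  push_cast at hΦ
  have hmono : StrictMono Φ := strictMono_of_hasDerivAt_pos hΦd fun x => Real.exp_pos _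
  have hbij : BijOn φ (Icc a b) (Icc (φ a) (φ b)) := by
    refine BijOn.congr ?_ hΦe
    rw [← hΦe (left_mem_Icc.2 hab.le), ← hΦe (right_mem_Icc.2 hab.le)]
    refine ⟨fun x hx => ⟨hmono.monotone hx.1, hmono.monotone hx.2⟩, hmono.injective.injOn, ?_⟩
    exact intermediate_value_Icc hab.le hΦ.continuous.continuousOn
  refine ⟨hbij, hΦ.contDiffOn.congr fun x hx => (hΦe hx).symm, Function.invFun Φ, ?_, ?_, ?_⟩
  · intro y hy
    obtain ⟨x, hx, rfl⟩ := hbij.surjOn hy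
    rw [← hΦe hx]
    apply ContDiffAt.contDiffWithinAt
    have hfd := (hΦd x).hasFDerivAt_equiv (Real.exp_pos (L x)).ne'
    have hn : ((n : WithTop ℕ∞) + 1) ≠ 0 := by simp
    have hstrict := hΦ.contDiffAt.hasStrictFDerivAt' hfd hn
    refine ((hΦ.contDiffAt (x := x)).to_localInverse hfd hn).congr_of_eventuallyEq ?_
    -- The global left inverse of the injective `Φ` agrees with any local right inverse.
    filter_upwards [hstrict.eventually_right_inverse] with y hy
    conv_lhs => rw [← hy]
    exact Function.leftInverse_invFun hmono.injective _
  · intro x hx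
    rw [← hΦe hx]
    exact Function.leftInverse_invFun hmono.injective _
  · intro y hy
    obtain ⟨x, hx, rfl⟩ := hbij.surjOn hy
    rw [← hΦe hx, Function.leftInverse_invFun hmono.injective x]
    exact (hΦe hx).symm

/-- Differentiation under the integral sign: the derivative in `p` is an integral of the same shape,
with weight `w u * u` and integrand `deriv H`, so the claim follows by induction on `n`. -/
theorem contDiff_weighted_average (a : ℝ) (n : ℕ) : ∀ (w H : ℝ → ℝ), Continuous w → ContDiff ℝ n H →
    ContDiff ℝ n (fun p => ∫ u in (0:ℝ)..1, w u * H (a + (p - a) * u)) := by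
  induction n with
  | zero =>
    intro w H hw hH
    have := hH.continuous
    refine contDiff_zero.2 ?_
    apply intervalIntegral.continuous_parametric_intervalIntegral_of_continuous'
    simp only [Function.uncurry_def]
    fun_prop
  | succ n ih =>
    intro w H hw hH
    push_cast at hH ⊢
    rw [contDiff_succ_iff_deriv] at hH
    obtain ⟨hHd, -, hHn⟩ := hH
    have hc := hHd.continuous
    have hc' := hHn.continuous
    have key : ∀ p, HasDerivAt (fun p => ∫ u in (0:ℝ)..1, w u * H (a + (p - a) * u))
        (∫ u in (0:ℝ)..1, (w u * u) * deriv H (a + (p - a) * u)) p := by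
      intro p
      have hcont : Continuous (fun z : ℝ × ℝ => (w z.2 * z.2) * deriv H (a + (z.1 - a) * z.2)) := by
        fun_prop
      obtain ⟨C, hC⟩ := ((isCompact_closedBall p 1).prod (isCompact_Icc (a := (0:ℝ)) (b := 1))
        ).exists_bound_of_continuousOn hcont.continuousOn
      refine (intervalIntegral.hasDerivAt_integral_of_dominated_loc_of_deriv_le (bound := fun _ => C)
        (F' := fun p u => (w u * u) * deriv H (a + (p - a) * u))
        (Metric.closedBall_mem_nhds p one_pos) ?_ ?_ ?_ ?_ ?_ ?_).2
      · refine Eventually.of_forall fun x => Continuous.aestronglyMeasurable ?_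
        fun_prop
      · apply Continuous.intervalIntegrable
        fun_prop
      · apply Continuous.aestronglyMeasurable
        fun_prop
      · refine Eventually.of_forall fun u hu x hx => hC (x, u) ⟨hx, ?_⟩
        rw [uIoc_of_le zero_le_one] at hu
        exact ⟨hu.1.le, hu.2⟩
      · simp
      · refine Eventually.of_forall fun u hu x hx => ?_
        have h1 : HasDerivAt (fun x => a + (x - a) * u) u x := by
          simpa using (((hasDerivAt_id x).sub_const a).mul_const u).const_add a
        have := ((hHd (a + (x - a) * u)).hasDerivAt.comp x h1).const_mul (w u)
        refine this.congr_deriv ?_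
        ring
    rw [contDiff_succ_iff_deriv]
    refine ⟨fun p => (key p).differentiableAt, by simp, ?_⟩
    rw [funext fun p => (key p).deriv]
    exact ih (fun u => w u * u) _ (by fun_prop) hHn

/-- The exact order of vanishing of `F - F a` at `a`: the substitution `t = a + (x - a) u` in the
integral of `F'` extracts the factor `(x - a) ^ ρ`. -/
theorem sub_eq_rpow_mul_average {a b ρ : ℝ} (hρ : 1 ≤ ρ) {F H : ℝ → ℝ} (hH : Continuous H)
    (hF : ∀ x ∈ Icc a b, HasDerivWithinAt F ((x - a) ^ (ρ - 1) * H x) (Icc a b) x)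
    {x : ℝ} (hx : x ∈ Icc a b) :
    F x - F a = (x - a) ^ ρ * ∫ u in (0:ℝ)..1, u ^ (ρ - 1) * H (a + (x - a) * u) := by
  have hw : Continuous fun u : ℝ => u ^ (ρ - 1) := Real.continuous_rpow_const (by linarith)
  have hf : Continuous fun t => (t - a) ^ (ρ - 1) * H t :=
    (hw.comp (continuous_id.sub continuous_const)).mul hH
  have h1 : F a + ∫ t in a..x, (t - a) ^ (ρ - 1) * H t = F x := eqOn_primitive hf hF hx
  have h2 := intervalIntegral.smul_integral_comp_add_mul (a := 0) (b := 1)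
    (fun t => (t - a) ^ (ρ - 1) * H t) (x - a) a
  have hxa : 0 ≤ x - a := sub_nonneg.2 hx.1
  have h3 : ∫ u in (0:ℝ)..1, (a + (x - a) * u - a) ^ (ρ - 1) * H (a + (x - a) * u) =
      ∫ u in (0:ℝ)..1, (x - a) ^ (ρ - 1) * (u ^ (ρ - 1) * H (a + (x - a) * u)) := by
    refine intervalIntegral.integral_congr fun u hu => ?_
    rw [uIcc_of_le zero_le_one] at hu
    simp only [add_sub_cancel_left]
    rw [Real.mul_rpow hxa hu.1, mul_assoc]
  have h4 : (x - a) * (x - a) ^ (ρ - 1) = (x - a) ^ ρ := by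
    rcases hxa.eq_or_lt with h0 | h0
    · rw [← h0, zero_mul, Real.zero_rpow (by linarith)]
    · rw [← Real.rpow_one_add' hxa (by linarith)]
      congr 1
      ring
  rw [h3, intervalIntegral.integral_const_mul, smul_eq_mul, ← mul_assoc, h4] at h2
  simp only [mul_zero, add_zero, mul_one, add_sub_cancel] at h2
  rw [h2]
  linarith

/-- The result at a left endpoint `a` where `F'` vanishes like `(x - a) ^ (ρ - 1)`. -/
theorem diffeo_root {a b : ℝ} (hab : a < b) {ρ : ℝ} (hρ : 1 ≤ ρ) {N : ℕ} (hN : 1 ≤ N)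
    {F h : ℝ → ℝ}
    (hF : ∀ x ∈ Icc a b, HasDerivWithinAt F ((x - a) ^ (ρ - 1) * h x) (Icc a b) x)
    (hh : ContDiffOn ℝ N h (Icc a b)) (hpos : ∀ x ∈ Icc a b, 0 < h x) :
    BijOn (fun p => (F p - F a) ^ (1 / ρ)) (Icc a b) (Icc 0 ((F b - F a) ^ (1 / ρ))) ∧
      ContDiffOn ℝ (N + 1) (fun p => (F p - F a) ^ (1 / ρ)) (Icc a b) ∧
      ∃ g : ℝ → ℝ, ContDiffOn ℝ (N + 1) g (Icc 0 ((F b - F a) ^ (1 / ρ))) ∧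
        InvOn g (fun p => (F p - F a) ^ (1 / ρ)) (Icc a b)
          (Icc 0 ((F b - F a) ^ (1 / ρ))) := by
  have hρ0 : 0 < ρ := by linarith
  obtain ⟨H, hH, hHe⟩ := exists_contDiff_extension hab N h hh
  have hw : Continuous fun u : ℝ => u ^ (ρ - 1) := Real.continuous_rpow_const (by linarith)
  have hJ := contDiff_weighted_average a N _ H hw hH
  have hfac := fun x hx => sub_eq_rpow_mul_average (x := x) hρ hH.continuous
    (fun x hx => by rw [hHe hx]; exact hF x hx) hx
  have hJpos : ∀ x ∈ Icc a b, 0 < ∫ u in (0:ℝ)..1, u ^ (ρ - 1) * H (a + (x - a) * u) := by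
    intro x hx
    have hHc := hH.continuous
    refine intervalIntegral.intervalIntegral_pos_of_pos_on
      (Continuous.intervalIntegrable (by fun_prop) _ _) (fun u hu => ?_) one_pos
    have hu' : a + (x - a) * u ∈ Icc a b := by
      have := sub_nonneg.2 hx.1
      constructor
      · nlinarith [mul_nonneg this hu.1.le]
      · nlinarith [mul_nonneg this (sub_nonneg.2 hu.2.le), hx.2]
    rw [hHe hu']
    exact mul_pos (Real.rpow_pos_of_pos hu.1 _) (hpos _ hu')
  have hJa : ∫ u in (0:ℝ)..1, u ^ (ρ - 1) * H (a + (a - a) * u) = h a / ρ := by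
    simp only [sub_self, zero_mul, add_zero]
    rw [intervalIntegral.integral_mul_const, integral_rpow (Or.inl (by linarith)),
      hHe (left_mem_Icc.2 hab.le)]
    simp [Real.zero_rpow hρ0.ne']
    field_simp
  set J : ℝ → ℝ := fun x => ∫ u in (0:ℝ)..1, u ^ (ρ - 1) * H (a + (x - a) * u) with hJdef
  have hroot : EqOn (fun p => (F p - F a) ^ (1 / ρ)) (fun p => (p - a) * J p ^ (1 / ρ))
      (Icc a b) := by
    intro x hx
    have hxa : 0 ≤ x - a := sub_nonneg.2 hx.1
    simp only
    rw [hfac x hx, Real.mul_rpow (Real.rpow_nonneg hxa _) (hJpos x hx).le, ← Real.rpow_mul hxa,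
      mul_one_div_cancel hρ0.ne', Real.rpow_one]
  have hder : ∀ x ∈ Icc a b, HasDerivWithinAt (fun p => (F p - F a) ^ (1 / ρ))
      (1 / ρ * J x ^ (1 / ρ - 1) * h x) (Icc a b) x := by
    intro x hx
    rcases hx.1.eq_or_lt with rfl | hxa
    -- At `a` itself `F - F a` vanishes and the chain rule for the root is unavailable; the product
    -- rule for `(x - a) * J x ^ (1 / ρ)` gives `J a ^ (1 / ρ)`, and `J a = h a / ρ`.
    · have hJd : DifferentiableAt ℝ J a := (hJ.differentiable (by simp; omega)) a
      have h1 := ((hasDerivAt_id a).sub_const a).mul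
        (hJd.hasDerivAt.rpow_const (p := 1 / ρ) (Or.inl (hJpos a hx).ne'))
      refine (h1.hasDerivWithinAt.congr_of_mem hroot hx).congr_deriv ?_
      have hJa' : J a = h a / ρ := hJa
      have hpJ : 0 < J a := hJpos a hx
      rw [Real.rpow_sub_one hpJ.ne', hJa']
      have := (hpos a hx).ne'
      simp
      field_simp
    · have hxa' : 0 < x - a := sub_pos.2 hxa
      have hpJ : 0 < J x := hJpos x hx
      have hFpos : 0 < F x - F a := by
        rw [hfac x hx]
        exact mul_pos (Real.rpow_pos_of_pos hxa' _) hpJ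
      refine (((hF x hx).sub_const (F a)).rpow_const (p := 1 / ρ)
        (Or.inl hFpos.ne')).congr_deriv ?_
      have hfx : F x - F a = (x - a) ^ ρ * J x := hfac x hx
      rw [hfx, Real.mul_rpow (Real.rpow_nonneg hxa'.le _) hpJ.le, ← Real.rpow_mul hxa'.le]
      have : (x - a) ^ (ρ - 1) * (x - a) ^ (ρ * (1 / ρ - 1)) = 1 := by
        rw [← Real.rpow_add hxa']
        have : ρ - 1 + ρ * (1 / ρ - 1) = 0 := by field_simp; ring
        rw [this, Real.rpow_zero]
      linear_combination (1 / ρ * J x ^ (1 / ρ - 1) * h x) * this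
  have hmain := diffeo_of_deriv_pos hab (n := N) hder
    ((contDiffOn_const.mul (hJ.contDiffOn.rpow_const_of_ne fun x hx => (hJpos x hx).ne')).mul hh)
    (fun x hx => mul_pos (mul_pos (by positivity) (Real.rpow_pos_of_pos (hJpos x hx) _))
      (hpos x hx))
  have h0 : (F a - F a) ^ (1 / ρ) = 0 := by
    rw [sub_self, Real.zero_rpow (by positivity)]
  simpa only [h0] using hmain

/-- under Assumption (P_{ρ1,ρ2,N}), for fixed q ∈ (p1,p2), the maps
φ1(p) := (ψ(p)-ψ(p1))^{1/ρ1} on [p1,q] and φ2(p) := (ψ(p2)-ψ(p))^{1/ρ2} on [q,p2] are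
bijections onto [0,s1] resp. [0,s2] which are C^{N+1} with C^{N+1} inverses. -/
theorem stmt_1 (p1 p2 : ℝ) (hp : p1 < p2) (N : ℕ) (hN : 1 ≤ N) (ρ1 ρ2 : ℝ)
    (hρ1 : 1 ≤ ρ1) (hρ2 : 1 ≤ ρ2) (ψ ψt : ℝ → ℝ)
    (hψ : ContDiffOn ℝ 1 ψ (Set.Icc p1 p2))
    (hψd : ∀ p ∈ Set.Icc p1 p2, derivWithin ψ (Set.Icc p1 p2) p
      = (p - p1) ^ (ρ1 - 1) * (p2 - p) ^ (ρ2 - 1) * ψt p)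
    (hψt : ContDiffOn ℝ N ψt (Set.Icc p1 p2))
    (hψtpos : ∀ p ∈ Set.Icc p1 p2, 0 < ψt p)
    (q : ℝ) (hq : q ∈ Set.Ioo p1 p2) :
    (let φ1 : ℝ → ℝ := fun p => (ψ p - ψ p1) ^ (1 / ρ1)
     let s1 : ℝ := φ1 q
     Set.BijOn φ1 (Set.Icc p1 q) (Set.Icc 0 s1) ∧
     ContDiffOn ℝ (N + 1) φ1 (Set.Icc p1 q) ∧
     ∃ g : ℝ → ℝ, ContDiffOn ℝ (N + 1) g (Set.Icc 0 s1) ∧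
       Set.InvOn g φ1 (Set.Icc p1 q) (Set.Icc 0 s1)) ∧
    (let φ2 : ℝ → ℝ := fun p => (ψ p2 - ψ p) ^ (1 / ρ2)
     let s2 : ℝ := φ2 q
     φ2 p2 = 0 ∧ φ2 q = s2 ∧
     Set.BijOn φ2 (Set.Icc q p2) (Set.Icc 0 s2) ∧
     ContDiffOn ℝ (N + 1) φ2 (Set.Icc q p2) ∧
     ∃ g : ℝ → ℝ, ContDiffOn ℝ (N + 1) g (Set.Icc 0 s2) ∧
       Set.InvOn g φ2 (Set.Icc q p2) (Set.Icc 0 s2)) := by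
  have hd : ∀ p ∈ Icc p1 p2, HasDerivWithinAt ψ
      ((p - p1) ^ (ρ1 - 1) * (p2 - p) ^ (ρ2 - 1) * ψt p) (Icc p1 p2) p := fun p hp => by
    rw [← hψd p hp]
    exact (hψ.differentiableOn (by simp) p hp).hasDerivWithinAt
  constructor
  · have hsub : Icc p1 q ⊆ Icc p1 p2 := Icc_subset_Icc le_rfl hq.2.le
    have hlt : ∀ x ∈ Icc p1 q, 0 < p2 - x := fun x hx => by linarith [hx.2, hq.2]
    exact diffeo_root (h := fun p => (p2 - p) ^ (ρ2 - 1) * ψt p) hq.1 hρ1 hN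
      (fun x hx => ((hd x (hsub hx)).mono hsub).congr_deriv (by ring))
      (((contDiffOn_const.sub contDiffOn_id).rpow_const_of_ne
        fun x hx => (hlt x hx).ne').mul (hψt.mono hsub))
      (fun x hx => mul_pos (Real.rpow_pos_of_pos (hlt x hx) _) (hψtpos x (hsub hx)))
  · intro φ2 s2
    have hmaps : MapsTo (fun x : ℝ => -x) (Icc (-p2) (-q)) (Icc p1 p2) := fun x hx =>
      ⟨by linarith [hx.2, hq.1], by linarith [hx.1]⟩
    have hlt : ∀ x ∈ Icc (-p2) (-q), 0 < -x - p1 := fun x hx => by linarith [hx.2, hq.1]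
    have hneg : ContDiffOn ℝ N (fun x : ℝ => -x) (Icc (-p2) (-q)) := contDiffOn_id.neg
    obtain ⟨hb, hc, g, hgc, hgl, hgr⟩ := diffeo_root (F := fun x => -ψ (-x))
      (h := fun x => (-x - p1) ^ (ρ1 - 1) * ψt (-x)) (neg_lt_neg hq.2) hρ2 hN
      (fun x hx => by
        have h1 := ((hd (-x) (hmaps hx)).comp x (hasDerivAt_neg x).hasDerivWithinAt hmaps).neg
        refine h1.congr_deriv ?_
        rw [show x - -p2 = p2 - -x by ring]
        ring)
      (((hneg.sub contDiffOn_const).rpow_const_of_ne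
        fun x hx => (hlt x hx).ne').mul (hψt.comp hneg hmaps))
      (fun x hx => mul_pos (Real.rpow_pos_of_pos (hlt x hx) _) (hψtpos _ (hmaps hx)))
    have hφ : (fun x => (-ψ (-x) - -ψ (- -p2)) ^ (1 / ρ2)) = fun x => φ2 (-x) := by
      funext x
      simp only [φ2, neg_neg]
      congr 1
      ring
    have hs : (-ψ (- -q) - -ψ (- -p2)) ^ (1 / ρ2) = s2 := by
      simpa [s2] using congrFun hφ (-q)
    rw [hφ] at hb hc hgl hgr
    rw [hs] at hb hgc hgr
    have hnegbij : BijOn (fun x : ℝ => -x) (Icc q p2) (Icc (-p2) (-q)) :=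
      ⟨fun x hx => ⟨neg_le_neg hx.2, neg_le_neg hx.1⟩, neg_injective.injOn,
        fun y hy => ⟨-y, ⟨by linarith [hy.2], by linarith [hy.1]⟩, neg_neg y⟩⟩
    have hcomp : (fun x => φ2 (-x)) ∘ (fun x : ℝ => -x) = φ2 := by
      funext x
      simp
    refine ⟨?_, rfl, ?_, ?_, fun y => -g y, hgc.neg, ?_, ?_⟩
    · simp only [φ2, sub_self]
      exact Real.zero_rpow (by positivity)
    · exact hcomp ▸ hb.comp hnegbij
    · exact hcomp ▸ hc.comp contDiffOn_id.neg hnegbij.mapsTo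
    · intro x hx
      have := hgl (hnegbij.mapsTo hx)
      simp only [neg_neg] at this
      simp [this]
    · exact fun y hy => hgr hy
end

section
/- Fix ρ ≥ 1, 0 < μ ≤ 1 and ω > 0, and set θ := π/(2ρ). For every s > 0 the integral φ(s) := -e^{iθ} ∫_0^∞ (s + t e^{iθ})^{μ-1} exp(i ω (s + t e^{iθ})^ρ) dt converges absolutely, and the function φ is differentiable at every s > 0 with φ'(s) = s^{μ-1} exp(i ω s^ρ); i.e. φ is a primitive of s ↦ s^{μ-1} e^{i ω s^ρ} on (0,∞). -/
open MeasureTheory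

/-!
Write `w = e^{iθ}` with `θ = π/(2ρ)` and `f z = z^(μ-1) exp(iω z^ρ)`.  On the ray `z = s + t w` the
argument `α` of `z` lies in `[0, θ]`, so `α ≤ ρ α ≤ π/2` and `sin (ρ α) ≥ sin α`; hence
`Im z^ρ ≥ ‖z‖^(ρ-1) Im z ≥ s^(ρ-1) t sin θ` (`im_cpow_ge`, `arg_ray_le`).  Consequently both `f` and
`f'` decay exponentially in `t` along the ray, uniformly for `s` in a compact subset of `(0, ∞)`
(`ray_bounds`).  This gives absolute convergence, and allows differentiation under the integral sign.
Since `w f'(s + t w)` is the `t`-derivative of `f (s + t w)`, the fundamental theorem of calculus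
on `(0, ∞)` evaluates the derivative as `-(0 - f s) = f s`.
-/

namespace RayPrimitive

open Complex Set Filter Topology

/-- The integrand `z^(μ-1) exp(iω z^ρ)`. -/
noncomputable def f (ρ μ ω : ℝ) (z : ℂ) : ℂ :=
  z ^ ((μ : ℂ) - 1) * exp (I * (ω : ℂ) * z ^ (ρ : ℂ))

/-- The complex derivative of `f` on the slit plane. -/
noncomputable def f' (ρ μ ω : ℝ) (z : ℂ) : ℂ :=
  (((μ : ℂ) - 1) * z ^ ((μ : ℂ) - 1 - 1)) * exp (I * (ω : ℂ) * z ^ (ρ : ℂ)) +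
    z ^ ((μ : ℂ) - 1) *
      (exp (I * (ω : ℂ) * z ^ (ρ : ℂ)) * (I * (ω : ℂ) * ((ρ : ℂ) * z ^ ((ρ : ℂ) - 1))))

lemma hasDerivAt_f (ρ μ ω : ℝ) {z : ℂ} (hz : z ∈ slitPlane) :
    HasDerivAt (f ρ μ ω) (f' ρ μ ω z) z := by
  have h1 := (hasStrictDerivAt_cpow_const (c := (μ : ℂ) - 1) hz).hasDerivAt
  have h2 := (hasStrictDerivAt_cpow_const (c := (ρ : ℂ)) hz).hasDerivAt
  exact h1.mul (h2.const_mul (I * (ω : ℂ))).cexp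

lemma continuousAt_f' (ρ μ ω : ℝ) {z : ℂ} (hz : z ∈ slitPlane) :
    ContinuousAt (f' ρ μ ω) z := by
  have h : ∀ c : ℂ, ContinuousAt (fun z : ℂ => z ^ c) z := fun c =>
    (hasStrictDerivAt_cpow_const (c := c) hz).hasDerivAt.continuousAt
  have hE : ContinuousAt (fun z : ℂ => exp (I * (ω : ℂ) * z ^ (ρ : ℂ))) z :=
    (continuousAt_const.mul (h _)).cexp
  exact ((continuousAt_const.mul (h _)).mul hE).add
    ((h _).mul (hE.mul (continuousAt_const.mul (continuousAt_const.mul (h _)))))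

/-- In the sector `0 ≤ arg z ≤ π/(2ρ)` monotonicity of `sin` on `[0, π/2]` gives
`sin (arg z) ≤ sin (ρ arg z)`. -/
lemma im_cpow_ge {ρ : ℝ} (hρ : 1 ≤ ρ) {z : ℂ} (hz : z ≠ 0) (h0 : 0 ≤ arg z)
    (h1 : arg z * ρ ≤ Real.pi / 2) :
    ‖z‖ ^ (ρ - 1) * z.im ≤ (z ^ (ρ : ℂ)).im := by
  have hr : 0 < ‖z‖ := norm_pos_iff.mpr hz
  have him : (z ^ (ρ : ℂ)).im = ‖z‖ ^ ρ * Real.sin (arg z * ρ) := by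
    rw [cpow_def_of_ne_zero hz, exp_im, re_mul_ofReal, im_mul_ofReal, log_re, log_im,
      Real.rpow_def_of_pos hr]
  have hs : Real.sin (arg z) ≤ Real.sin (arg z * ρ) :=
    Real.sin_le_sin_of_le_of_le_pi_div_two (by linarith [Real.pi_pos]) h1
      (le_mul_of_one_le_right h0 hρ)
  have hp : ‖z‖ ^ ρ = ‖z‖ ^ (ρ - 1) * ‖z‖ := by
    rw [Real.rpow_sub_one hr.ne', div_mul_cancel₀ _ hr.ne']
  rw [him, hp]
  have : 0 ≤ ‖z‖ ^ (ρ - 1) * ‖z‖ := by positivity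
  calc _ = ‖z‖ ^ (ρ - 1) * ‖z‖ * Real.sin (arg z) := by rw [mul_assoc, norm_mul_sin_arg]
    _ ≤ _ := mul_le_mul_of_nonneg_left hs this

lemma ray_re (s t θ : ℝ) : ((s : ℂ) + t * exp ((θ : ℂ) * I)).re = s + t * Real.cos θ := by
  simp [exp_ofReal_mul_I_re]

lemma ray_im (s t θ : ℝ) : ((s : ℂ) + t * exp ((θ : ℂ) * I)).im = t * Real.sin θ := by
  simp [exp_ofReal_mul_I_im]

lemma arg_ray_le {s t θ : ℝ} (hs : 0 < s) (hθ0 : 0 < θ) (hθ : θ ≤ Real.pi / 2) :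
    arg ((s : ℂ) + t * exp ((θ : ℂ) * I)) ≤ θ := by
  set z := (s : ℂ) + t * exp ((θ : ℂ) * I) with hz
  by_contra! hlt
  have hre := ray_re s t θ
  have him := ray_im s t θ
  rw [← hz] at hre him
  have hsin : 0 < Real.sin θ := Real.sin_pos_of_pos_of_lt_pi hθ0 (by linarith [Real.pi_pos])
  have hpos : 0 < Real.sin (arg z - θ) :=
    Real.sin_pos_of_pos_of_lt_pi (by linarith) (by linarith [arg_le_pi z])
  -- `‖z‖ sin (arg z - θ)` is the imaginary part of `z e^{-iθ} = s e^{-iθ} + t`.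
  have key : ‖z‖ * Real.sin (arg z - θ) = -(s * Real.sin θ) := by
    rw [Real.sin_sub]
    have e1 := norm_mul_sin_arg z
    have e2 := norm_mul_cos_arg z
    rw [him] at e1
    rw [hre] at e2
    linear_combination Real.cos θ * e1 - Real.sin θ * e2
  have : 0 ≤ ‖z‖ * Real.sin (arg z - θ) := by positivity
  have : 0 < s * Real.sin θ := by positivity
  linarith

/-- Powers are dominated by exponentials, with an explicit constant. -/
lemma rpow_le_exp {p c x : ℝ} (hp : 0 ≤ p) (hc : 0 < c) (hx : 0 ≤ x) :
    x ^ p ≤ ((p + 1) / c) ^ p * Real.exp (c * x) := by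
  have hx1 : x ≤ (p + 1) / c * Real.exp (c * x / (p + 1)) := by
    have h := Real.add_one_le_exp (c * x / (p + 1))
    have : x = (p + 1) / c * (c * x / (p + 1)) := by field_simp
    calc x = (p + 1) / c * (c * x / (p + 1)) := this
      _ ≤ _ := mul_le_mul_of_nonneg_left (by linarith) (by positivity)
  calc x ^ p ≤ ((p + 1) / c * Real.exp (c * x / (p + 1))) ^ p :=
        Real.rpow_le_rpow hx hx1 hp
    _ = ((p + 1) / c) ^ p * Real.exp (c * x / (p + 1) * p) := by
        rw [Real.mul_rpow (by positivity) (by positivity), ← Real.exp_mul]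
    _ ≤ _ := by
        refine mul_le_mul_of_nonneg_left (Real.exp_le_exp.mpr ?_) (by positivity)
        rw [div_mul_eq_mul_div, div_le_iff₀ (by positivity)]
        nlinarith [mul_nonneg hc.le hx]

/-- Exponential decay of `f` and `f'` along the rays, uniform in the base point `s ∈ [a, b]`. -/
lemma ray_bounds {ρ μ ω a : ℝ} (b : ℝ) (hρ : 1 ≤ ρ) (hμ1 : μ ≤ 1) (hω : 0 < ω) (ha : 0 < a) :
    ∃ C c : ℝ, 0 < c ∧ ∀ s t : ℝ, a ≤ s → s ≤ b → 0 ≤ t →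
      ‖f ρ μ ω ((s : ℂ) + t * exp (((Real.pi / (2 * ρ) : ℝ) : ℂ) * I))‖ ≤ C * Real.exp (-c * t) ∧
      ‖f' ρ μ ω ((s : ℂ) + t * exp (((Real.pi / (2 * ρ) : ℝ) : ℂ) * I))‖
        ≤ C * Real.exp (-c * t) := by
  set θ : ℝ := Real.pi / (2 * ρ) with hθ
  have hθρ : θ * ρ = Real.pi / 2 := by rw [hθ]; field_simp
  have hθ0 : 0 < θ := by rw [hθ]; have := Real.pi_pos; positivity
  have hθ1 : θ ≤ Real.pi / 2 := by rw [← hθρ]; exact le_mul_of_one_le_right hθ0.le hρ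
  have hsin : 0 < Real.sin θ := Real.sin_pos_of_pos_of_lt_pi hθ0 (by linarith [Real.pi_pos])
  have hcos : 0 ≤ Real.cos θ := Real.cos_nonneg_of_mem_Icc ⟨by linarith, hθ1⟩
  -- Half of the decay rate `2 * c` of the exponential factor absorbs the power `‖z‖^(ρ-1)` in `f'`.
  set c : ℝ := ω * (a ^ (ρ - 1) * Real.sin θ) / 2 with hc
  have hc0 : 0 < c := by positivity
  set K : ℝ := ((ρ - 1 + 1) / c) ^ (ρ - 1) with hK
  have hK0 : 0 ≤ K := by rw [hK]; apply Real.rpow_nonneg; apply div_nonneg <;> linarith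
  set C1 : ℝ := (1 - μ) * a ^ (μ - 1 - 1) + a ^ (μ - 1) * (ω * ρ * (K * Real.exp (c * b))) with hC1
  have hμ' : 0 ≤ 1 - μ := by linarith
  have hC10 : 0 ≤ C1 := by positivity
  have hA0 : 0 ≤ a ^ (μ - 1) := by positivity
  refine ⟨a ^ (μ - 1) + C1, c, hc0, fun s t has hsb ht => ?_⟩
  have hs : 0 < s := ha.trans_le has
  have hre := ray_re s t θ
  have him := ray_im s t θ
  have harg := arg_ray_le (t := t) hs hθ0 hθ1
  have hnorm : ‖(s : ℂ) + t * exp ((θ : ℂ) * I)‖ ≤ b + t := by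
    refine (norm_add_le _ _).trans ?_
    rw [norm_mul, norm_exp_ofReal_mul_I, norm_real, norm_real, Real.norm_of_nonneg hs.le,
      Real.norm_of_nonneg ht]
    linarith
  set z := (s : ℂ) + t * exp ((θ : ℂ) * I) with hz
  have hrea : a ≤ z.re := by rw [hre]; nlinarith [mul_nonneg ht hcos]
  have har : a ≤ ‖z‖ := hrea.trans (re_le_norm z)
  have hr0 : 0 < ‖z‖ := ha.trans_le har
  have hz0 : z ≠ 0 := norm_pos_iff.mp hr0
  have harg0 : 0 ≤ arg z := by rw [arg_nonneg_iff, him]; positivity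
  have hIm : a ^ (ρ - 1) * (t * Real.sin θ) ≤ (z ^ (ρ : ℂ)).im := by
    refine le_trans ?_ (im_cpow_ge hρ hz0 harg0 ?_)
    · rw [him]
      gcongr
    · rw [← hθρ]; gcongr
  have hE : ‖exp (I * (ω : ℂ) * z ^ (ρ : ℂ))‖ ≤ Real.exp (-(2 * c) * t) := by
    rw [norm_exp]
    have : (I * (ω : ℂ) * z ^ (ρ : ℂ)).re = -(ω * (z ^ (ρ : ℂ)).im) := by
      simp [mul_re, mul_im]
    rw [this]
    apply Real.exp_le_exp.mpr
    have := mul_le_mul_of_nonneg_left hIm hω.le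
    rw [hc]
    linarith
  have hEc : Real.exp (-(2 * c) * t) ≤ Real.exp (-c * t) := by
    apply Real.exp_le_exp.mpr
    nlinarith [mul_nonneg hc0.le ht]
  have hn : ∀ x : ℝ, ‖z ^ (x : ℂ)‖ = ‖z‖ ^ x := fun x => norm_cpow_real z x
  have hn1 : ‖z ^ ((μ : ℂ) - 1)‖ ≤ a ^ (μ - 1) := by
    have := hn (μ - 1)
    push_cast at this
    rw [this]
    exact Real.rpow_le_rpow_of_nonpos ha har (by linarith)
  have hn2 : ‖z ^ ((μ : ℂ) - 1 - 1)‖ ≤ a ^ (μ - 1 - 1) := by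
    have := hn (μ - 1 - 1)
    push_cast at this
    rw [this]
    exact Real.rpow_le_rpow_of_nonpos ha har (by linarith)
  have hn3 : ‖z ^ ((ρ : ℂ) - 1)‖ ≤ K * Real.exp (c * b) * Real.exp (c * t) := by
    have := hn (ρ - 1)
    push_cast at this
    rw [this]
    calc ‖z‖ ^ (ρ - 1) ≤ (b + t) ^ (ρ - 1) := by gcongr
      _ ≤ K * Real.exp (c * (b + t)) := rpow_le_exp (by linarith) hc0 (by linarith)
      _ = _ := by rw [mul_add, Real.exp_add]; ring
  have hexp : 0 < Real.exp (-c * t) := Real.exp_pos _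
  constructor
  · rw [f, norm_mul]
    calc _ ≤ a ^ (μ - 1) * Real.exp (-c * t) := by gcongr; exact hE.trans hEc
      _ ≤ _ := by gcongr; linarith
  · rw [f']
    refine (norm_add_le _ _).trans ?_
    simp only [norm_mul, norm_I, norm_real, one_mul]
    have hμn : ‖(μ : ℂ) - 1‖ = 1 - μ := by
      rw [← ofReal_one, ← ofReal_sub, norm_real, Real.norm_eq_abs, abs_of_nonpos (by linarith)]
      ring
    rw [hμn, Real.norm_of_nonneg hω.le, Real.norm_of_nonneg (by linarith : 0 ≤ ρ)]
    calc _ ≤ (1 - μ) * a ^ (μ - 1 - 1) * Real.exp (-c * t) +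
          a ^ (μ - 1) * (Real.exp (-(2 * c) * t) *
            (ω * (ρ * (K * Real.exp (c * b) * Real.exp (c * t))))) := by
          gcongr
          exact hE.trans hEc
      _ = C1 * Real.exp (-c * t) := by
          have : Real.exp (-(2 * c) * t) = Real.exp (-c * t) * Real.exp (-c * t) := by
            rw [← Real.exp_add]; ring_nf
          have h1 : Real.exp (-c * t) * Real.exp (c * t) = 1 := by
            rw [← Real.exp_add]; simp
          rw [this, hC1]
          linear_combination a ^ (μ - 1) * Real.exp (-c * t) * ω * ρ * K * Real.exp (c * b) * h1
      _ ≤ _ := by gcongr; linarith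

lemma integrableOn_bound (C : ℝ) {c : ℝ} (hc : 0 < c) :
    IntegrableOn (fun t : ℝ => C * Real.exp (-c * t)) (Ioi 0) :=
  (exp_neg_integrableOn_Ioi 0 hc).const_mul C

lemma ray_mem_slitPlane {ρ s t : ℝ} (hρ : 1 ≤ ρ) (hs : 0 < s) (ht : 0 ≤ t) :
    (s : ℂ) + t * exp (((Real.pi / (2 * ρ) : ℝ) : ℂ) * I) ∈ slitPlane := by
  have hθ0 : 0 ≤ Real.pi / (2 * ρ) := by have := Real.pi_pos; positivity
  have hθ1 : Real.pi / (2 * ρ) ≤ Real.pi / 2 := by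
    have := Real.pi_pos
    gcongr
    linarith
  have hcos : 0 ≤ Real.cos (Real.pi / (2 * ρ)) :=
    Real.cos_nonneg_of_mem_Icc ⟨by linarith [Real.pi_pos], hθ1⟩
  left
  rw [ray_re]
  positivity

lemma continuous_ray (s : ℝ) (w : ℂ) : Continuous fun t : ℝ => (s : ℂ) + t * w := by fun_prop

lemma aesm_f {ρ s : ℝ} (μ ω : ℝ) (hρ : 1 ≤ ρ) (hs : 0 < s) :
    AEStronglyMeasurable
      (fun t : ℝ => f ρ μ ω ((s : ℂ) + t * exp (((Real.pi / (2 * ρ) : ℝ) : ℂ) * I)))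
      (volume.restrict (Ioi 0)) := by
  refine ContinuousOn.aestronglyMeasurable (fun t ht => ?_) measurableSet_Ioi
  refine ContinuousAt.continuousWithinAt ?_
  exact ContinuousAt.comp (g := f ρ μ ω)
    (hasDerivAt_f ρ μ ω (ray_mem_slitPlane hρ hs (le_of_lt ht))).continuousAt
    (continuous_ray s _).continuousAt

lemma aesm_f' {ρ s : ℝ} (μ ω : ℝ) (hρ : 1 ≤ ρ) (hs : 0 < s) :
    AEStronglyMeasurable
      (fun t : ℝ => f' ρ μ ω ((s : ℂ) + t * exp (((Real.pi / (2 * ρ) : ℝ) : ℂ) * I)))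
      (volume.restrict (Ioi 0)) := by
  refine ContinuousOn.aestronglyMeasurable (fun t ht => ?_) measurableSet_Ioi
  refine ContinuousAt.continuousWithinAt ?_
  exact ContinuousAt.comp (g := f' ρ μ ω)
    (continuousAt_f' ρ μ ω (ray_mem_slitPlane hρ hs (le_of_lt ht)))
    (continuous_ray s _).continuousAt

lemma integrableOn_f {ρ μ ω s : ℝ} (hρ : 1 ≤ ρ) (hμ1 : μ ≤ 1) (hω : 0 < ω) (hs : 0 < s) :
    IntegrableOn
      (fun t : ℝ => f ρ μ ω ((s : ℂ) + t * exp (((Real.pi / (2 * ρ) : ℝ) : ℂ) * I))) (Ioi 0) := by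
  obtain ⟨C, c, hc, hb⟩ := ray_bounds s hρ hμ1 hω hs
  refine Integrable.mono' (integrableOn_bound C hc) (aesm_f μ ω hρ hs) ?_
  filter_upwards [ae_restrict_mem measurableSet_Ioi] with t ht
  exact (hb s t le_rfl le_rfl (le_of_lt ht)).1

/-- The fundamental theorem of calculus for `t ↦ f (s + t w)` on `(0, ∞)`. -/
lemma integral_f' {ρ μ ω s : ℝ} (hρ : 1 ≤ ρ) (hμ1 : μ ≤ 1) (hω : 0 < ω) (hs : 0 < s) :
    exp (((Real.pi / (2 * ρ) : ℝ) : ℂ) * I) * ∫ t in Ioi (0 : ℝ),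
      f' ρ μ ω ((s : ℂ) + t * exp (((Real.pi / (2 * ρ) : ℝ) : ℂ) * I)) = - f ρ μ ω s := by
  obtain ⟨C, c, hc, hb⟩ := ray_bounds s hρ hμ1 hω hs
  set w := exp (((Real.pi / (2 * ρ) : ℝ) : ℂ) * I) with hw
  have hint : IntegrableOn (fun t : ℝ => f' ρ μ ω ((s : ℂ) + t * w)) (Ioi 0) := by
    refine Integrable.mono' (integrableOn_bound C hc) (aesm_f' μ ω hρ hs) ?_
    filter_upwards [ae_restrict_mem measurableSet_Ioi] with t ht
    exact (hb s t le_rfl le_rfl (le_of_lt ht)).2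
  have hder : ∀ t ∈ Ici (0 : ℝ), HasDerivAt (fun t : ℝ => f ρ μ ω ((s : ℂ) + t * w))
      (w * f' ρ μ ω ((s : ℂ) + t * w)) t := by
    intro t ht
    have h1 : HasDerivAt (fun t : ℝ => (s : ℂ) + t * w) w t := by
      simpa using ((hasDerivAt_id t).ofReal_comp.mul_const w).const_add (s : ℂ)
    have h2 := hasDerivAt_f ρ μ ω (ray_mem_slitPlane hρ hs ht)
    have h3 := HasDerivAt.comp t h2 h1
    rw [mul_comm]
    exact h3
  have hlim : Tendsto (fun t : ℝ => f ρ μ ω ((s : ℂ) + t * w)) atTop (𝓝 0) := by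
    have hg : Tendsto (fun t : ℝ => C * Real.exp (-c * t)) atTop (𝓝 0) := by
      have h : Tendsto (fun t : ℝ => -c * t) atTop atBot :=
        tendsto_id.const_mul_atTop_of_neg (by linarith)
      simpa using (Real.tendsto_exp_atBot.comp h).const_mul C
    refine squeeze_zero_norm' ?_ hg
    filter_upwards [eventually_ge_atTop 0] with t ht
    exact (hb s t le_rfl le_rfl ht).1
  have := integral_Ioi_of_hasDerivAt_of_tendsto' hder (hint.const_mul w) hlim
  rw [integral_const_mul] at this
  simpa using this

lemma hasDerivAt_integral {ρ μ ω s : ℝ} (hρ : 1 ≤ ρ) (hμ1 : μ ≤ 1) (hω : 0 < ω) (hs : 0 < s) :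
    HasDerivAt (fun s' : ℝ => ∫ t in Ioi (0 : ℝ),
        f ρ μ ω ((s' : ℂ) + t * exp (((Real.pi / (2 * ρ) : ℝ) : ℂ) * I)))
      (∫ t in Ioi (0 : ℝ),
        f' ρ μ ω ((s : ℂ) + t * exp (((Real.pi / (2 * ρ) : ℝ) : ℂ) * I))) s := by
  obtain ⟨C, c, hc, hb⟩ := ray_bounds (2 * s) hρ hμ1 hω (half_pos hs)
  have hnhds : Icc (s / 2) (2 * s) ∈ 𝓝 s := Icc_mem_nhds (by linarith) (by linarith)
  refine (hasDerivAt_integral_of_dominated_loc_of_deriv_le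
    (F := fun (s' : ℝ) (t : ℝ) =>
      f ρ μ ω ((s' : ℂ) + t * exp (((Real.pi / (2 * ρ) : ℝ) : ℂ) * I)))
    (F' := fun (s' : ℝ) (t : ℝ) =>
      f' ρ μ ω ((s' : ℂ) + t * exp (((Real.pi / (2 * ρ) : ℝ) : ℂ) * I)))
    (bound := fun t => C * Real.exp (-c * t)) hnhds ?_ (integrableOn_f hρ hμ1 hω hs)
    (aesm_f' μ ω hρ hs) ?_ (integrableOn_bound C hc) ?_).2
  · filter_upwards [hnhds] with x hx
    exact aesm_f μ ω hρ (lt_of_lt_of_le (half_pos hs) hx.1)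
  · filter_upwards [ae_restrict_mem measurableSet_Ioi] with t ht x hx
    exact (hb x t hx.1 hx.2 (le_of_lt ht)).2
  · filter_upwards [ae_restrict_mem measurableSet_Ioi] with t ht x hx
    have h1 : HasDerivAt (fun x : ℝ =>
        (x : ℂ) + t * exp (((Real.pi / (2 * ρ) : ℝ) : ℂ) * I)) 1 x := by
      simpa using (hasDerivAt_id x).ofReal_comp.add_const
        ((t : ℂ) * exp (((Real.pi / (2 * ρ) : ℝ) : ℂ) * I))
    have h2 := hasDerivAt_f ρ μ ω
      (ray_mem_slitPlane hρ (lt_of_lt_of_le (half_pos hs) hx.1) (le_of_lt ht))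
    have h3 := HasDerivAt.comp x h2 h1
    rw [mul_one] at h3
    exact h3

end RayPrimitive

/-- for ρ ≥ 1, 0 < μ ≤ 1, ω > 0 and θ := π/(2ρ), for every s > 0 the integral
φ(s) := -e^{iθ} ∫_0^∞ (s+te^{iθ})^{μ-1} e^{iω(s+te^{iθ})^ρ} dt converges absolutely, and φ is
differentiable at every s > 0 with φ'(s) = s^{μ-1} e^{iωs^ρ}. -/
theorem stmt_3 (ρ μ ω : ℝ) (hρ : 1 ≤ ρ) (hμ0 : 0 < μ) (hμ1 : μ ≤ 1) (hω : 0 < ω) :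
    (∀ s : ℝ, 0 < s → MeasureTheory.IntegrableOn
      (fun t : ℝ =>
        ((s : ℂ) + (t : ℂ) * Complex.exp (((Real.pi / (2 * ρ) : ℝ) : ℂ) * Complex.I)) ^ ((μ : ℂ) - 1)
          * Complex.exp (Complex.I * (ω : ℂ) *
            ((s : ℂ) + (t : ℂ) * Complex.exp (((Real.pi / (2 * ρ) : ℝ) : ℂ) * Complex.I)) ^ (ρ : ℂ)))
      (Set.Ioi 0)) ∧
    (∀ s : ℝ, 0 < s → HasDerivAt
      (fun s' : ℝ => -(Complex.exp (((Real.pi / (2 * ρ) : ℝ) : ℂ) * Complex.I)) *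
        ∫ t in Set.Ioi (0 : ℝ),
          ((s' : ℂ) + (t : ℂ) * Complex.exp (((Real.pi / (2 * ρ) : ℝ) : ℂ) * Complex.I)) ^ ((μ : ℂ) - 1)
            * Complex.exp (Complex.I * (ω : ℂ) *
              ((s' : ℂ) + (t : ℂ) * Complex.exp (((Real.pi / (2 * ρ) : ℝ) : ℂ) * Complex.I)) ^ (ρ : ℂ)))
      (((s ^ (μ - 1) : ℝ) : ℂ) * Complex.exp (Complex.I * (ω : ℂ) * ((s ^ ρ : ℝ) : ℂ))) s) := by
  refine ⟨fun s hs => RayPrimitive.integrableOn_f hρ hμ1 hω hs, fun s hs => ?_⟩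
  have h := (RayPrimitive.hasDerivAt_integral hρ hμ1 hω hs).const_mul
    (-(Complex.exp (((Real.pi / (2 * ρ) : ℝ) : ℂ) * Complex.I)))
  rw [neg_mul, RayPrimitive.integral_f' hρ hμ1 hω hs, neg_neg] at h
  have hval : RayPrimitive.f ρ μ ω s =
      ((s ^ (μ - 1) : ℝ) : ℂ) * Complex.exp (Complex.I * (ω : ℂ) * ((s ^ ρ : ℝ) : ℂ)) := by
    rw [RayPrimitive.f, Complex.ofReal_cpow hs.le, Complex.ofReal_cpow hs.le]
    push_cast
    rfl
  rw [hval] at h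
  exact h
end

section
/- Let ρ ≥ 1, 0 < μ < ρ and ω > 0. Then the improper integral lim_{R→∞} ∫_0^R t^{μ-1} exp(i ω t^ρ) dt exists and equals (1/ρ) · Γ(μ/ρ) · e^{iπμ/(2ρ)} · ω^{-μ/ρ}, where Γ is the Gamma function. -/
/-!
Rotation of the ray of integration, carried out by an ODE in the angle instead of Cauchy's theorem.
For fixed `R` put `I(w) = ∫₀ᴿ t^(μ-1) exp(-w t^ρ) dt`, an entire function of `w`. Integrating
`d/dt (t^μ exp(-w t^ρ))` gives `μ I(w) + ρ w I'(w) = R^μ exp(-w R^ρ)`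
(`hasDerivAt_rayIntegral`). Hence `F(φ) = e^{-iφμ/ρ} I(ω e^{-iφ})` has derivative
`-(i/ρ) e^{-iφμ/ρ} R^μ exp(-ω e^{-iφ} R^ρ)`, of norm `(1/ρ) R^μ exp(-ω R^ρ cos φ)`. Jordan's
inequality `cos φ ≥ 1 - 2φ/π` bounds `‖F(π/2) - F(0)‖` by a multiple of `R^(μ-ρ)`, which tends to
`0` because `μ < ρ` (`norm_rotated_sub_le`). Finally `F(0)` is a truncated real Gamma integral, and
`F(π/2)` is `e^{-iπμ/(2ρ)}` times the oscillatory integral.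
-/

open MeasureTheory Set Filter Topology

/-- The truncated integral `∫₀ᴿ t^(μ-1) exp(-w t^ρ) dt` as a function of the complex rate `w`. -/
noncomputable def rayIntegral (ρ μ R : ℝ) (w : ℂ) : ℂ :=
  ∫ t in (0:ℝ)..R, ((t ^ (μ - 1) : ℝ) : ℂ) * Complex.exp (-w * ((t ^ ρ : ℝ) : ℂ))

lemma intervalIntegrable_rpow_mul_continuous {μ : ℝ} (hμ : 0 < μ) (R : ℝ) {g : ℝ → ℂ}
    (hg : Continuous g) :
    IntervalIntegrable (fun t : ℝ => ((t ^ (μ - 1) : ℝ) : ℂ) * g t) volume 0 R := by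
  have h : IntervalIntegrable (fun t : ℝ => t ^ (μ - 1)) volume 0 R :=
    intervalIntegral.intervalIntegrable_rpow' (by linarith)
  have h' : IntervalIntegrable (fun t : ℝ => ((t ^ (μ - 1) : ℝ) : ℂ)) volume 0 R :=
    ⟨h.1.ofReal, h.2.ofReal⟩
  exact h'.mul_continuousOn hg.continuousOn

/-- `I = rayIntegral ρ μ R` is differentiable, and solves `μ I + ρ w I' = R^μ exp(-w R^ρ)`. -/
lemma hasDerivAt_rayIntegral {ρ μ R : ℝ} (hρ : 0 < ρ) (hμ : 0 < μ) (hR : 0 < R) (w : ℂ) :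
    ∃ D : ℂ, HasDerivAt (rayIntegral ρ μ R) D w ∧
      μ * rayIntegral ρ μ R w + ρ * w * D =
        ((R ^ μ : ℝ) : ℂ) * Complex.exp (-w * ((R ^ ρ : ℝ) : ℂ)) := by
  have hcont : Continuous fun t : ℝ => ((t ^ ρ : ℝ) : ℂ) :=
    Complex.continuous_ofReal.comp (Real.continuous_rpow_const hρ.le)
  have hcont' : ∀ v : ℂ, Continuous fun t : ℝ => Complex.exp (-v * ((t ^ ρ : ℝ) : ℂ)) :=
    fun v => Complex.continuous_exp.comp (continuous_const.mul hcont)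
  have hint := fun v : ℂ => intervalIntegrable_rpow_mul_continuous hμ R (hcont' v)
  have hint' := fun v : ℂ => intervalIntegrable_rpow_mul_continuous hμ R
    (g := fun t : ℝ => Complex.exp (-v * ((t ^ ρ : ℝ) : ℂ)) * (-((t ^ ρ : ℝ) : ℂ)))
    ((hcont' v).mul hcont.neg)
  have hbd : IntervalIntegrable
      (fun t : ℝ => t ^ (μ - 1) * (Real.exp ((‖w‖ + 1) * t ^ ρ) * t ^ ρ)) volume 0 R := by
    have h : IntervalIntegrable (fun t : ℝ => t ^ (μ - 1)) volume 0 R :=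
      intervalIntegral.intervalIntegrable_rpow' (by linarith)
    have hc : Continuous fun t : ℝ => t ^ ρ := Real.continuous_rpow_const hρ.le
    exact h.mul_continuousOn (by fun_prop)
  have key := intervalIntegral.hasDerivAt_integral_of_dominated_loc_of_deriv_le
    (μ := volume) (a := 0) (b := R) (x₀ := w) (s := Metric.ball w 1)
    (F := fun (v : ℂ) (t : ℝ) =>
      ((t ^ (μ - 1) : ℝ) : ℂ) * Complex.exp (-v * ((t ^ ρ : ℝ) : ℂ)))
    (F' := fun (v : ℂ) (t : ℝ) =>
      ((t ^ (μ - 1) : ℝ) : ℂ) * (Complex.exp (-v * ((t ^ ρ : ℝ) : ℂ)) * (-((t ^ ρ : ℝ) : ℂ))))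
    (bound := fun t : ℝ => t ^ (μ - 1) * (Real.exp ((‖w‖ + 1) * t ^ ρ) * t ^ ρ))
    (Metric.ball_mem_nhds w one_pos)
    (Eventually.of_forall fun v => (intervalIntegrable_iff.1 (hint v)).aestronglyMeasurable)
    (hint w) (intervalIntegrable_iff.1 (hint' w)).aestronglyMeasurable
    (by
      refine Eventually.of_forall fun t ht v hv => ?_
      rw [uIoc_of_le hR.le] at ht
      have h1 : (0:ℝ) ≤ t ^ (μ - 1) := Real.rpow_nonneg ht.1.le _
      have h2 : (0:ℝ) ≤ t ^ ρ := Real.rpow_nonneg ht.1.le _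
      rw [norm_mul, norm_mul, norm_neg, Complex.norm_real, Complex.norm_real, Complex.norm_exp,
        Real.norm_of_nonneg h1, Real.norm_of_nonneg h2, Complex.re_mul_ofReal]
      gcongr
      calc (-v).re ≤ ‖-v‖ := Complex.re_le_norm _
        _ = ‖w + (v - w)‖ := by rw [norm_neg]; congr 1; ring
        _ ≤ ‖w‖ + ‖v - w‖ := norm_add_le _ _
        _ ≤ ‖w‖ + 1 := by
          have := mem_ball_iff_norm.1 hv
          linarith)
    hbd
    (by
      refine Eventually.of_forall fun t _ v _ => ?_
      have h := (((hasDerivAt_id v).neg.mul_const ((t ^ ρ : ℝ) : ℂ)).cexp).const_mul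
        ((t ^ (μ - 1) : ℝ) : ℂ)
      simpa using h)
  refine ⟨_, key.2, ?_⟩
  have hftc := intervalIntegral.integral_eq_sub_of_hasDerivAt_of_le hR.le
    (f := fun t : ℝ => ((t ^ μ : ℝ) : ℂ) * Complex.exp (-w * ((t ^ ρ : ℝ) : ℂ)))
    (f' := fun t : ℝ =>
      μ * (((t ^ (μ - 1) : ℝ) : ℂ) * Complex.exp (-w * ((t ^ ρ : ℝ) : ℂ))) +
      ρ * w * (((t ^ (μ - 1) : ℝ) : ℂ) *
        (Complex.exp (-w * ((t ^ ρ : ℝ) : ℂ)) * (-((t ^ ρ : ℝ) : ℂ)))))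
    (((Complex.continuous_ofReal.comp (Real.continuous_rpow_const hμ.le)).mul
      (hcont' w)).continuousOn)
    (by
      intro t ht
      have h1 := (Real.hasDerivAt_rpow_const (x := t) (p := μ) (Or.inl ht.1.ne')).ofReal_comp
      have h2 := (Real.hasDerivAt_rpow_const (x := t) (p := ρ) (Or.inl ht.1.ne')).ofReal_comp
      have h3 := h1.mul ((h2.const_mul (-w)).cexp)
      refine h3.congr_deriv ?_
      have e : t ^ μ * t ^ (ρ - 1) = t ^ (μ - 1) * t ^ ρ := by
        rw [← Real.rpow_add ht.1, ← Real.rpow_add ht.1]; congr 1; ring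
      have e' : ((t ^ μ : ℝ) : ℂ) * ((t ^ (ρ - 1) : ℝ) : ℂ) =
        ((t ^ (μ - 1) : ℝ) : ℂ) * ((t ^ ρ : ℝ) : ℂ) := by exact_mod_cast e
      push_cast at e' ⊢
      linear_combination (-(w * ρ * Complex.exp (-w * ((t ^ ρ : ℝ) : ℂ)))) * e')
    (((hint w).const_mul _).add ((hint' w).const_mul _))
  rw [intervalIntegral.integral_add ((hint w).const_mul _) ((hint' w).const_mul _),
    intervalIntegral.integral_const_mul, intervalIntegral.integral_const_mul] at hftc
  rw [rayIntegral, hftc]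
  simp [Real.zero_rpow hμ.ne']

/-- The two ends `φ = π/2` and `φ = 0` of the rotation differ by `O(R^(μ-ρ))`. -/
lemma norm_rotated_sub_le {ρ μ ω R : ℝ} (hρ : 0 < ρ) (hμ : 0 < μ) (hω : 0 < ω) (hR : 0 < R) :
    ‖Complex.exp (-(Complex.I * ((Real.pi * μ / (2 * ρ) : ℝ) : ℂ))) *
        rayIntegral ρ μ R (-(Complex.I * ω)) - rayIntegral ρ μ R ω‖ ≤
      Real.pi / (2 * ρ * ω) * R ^ (μ - ρ) := by
  choose D hD hode using hasDerivAt_rayIntegral (R := R) hρ hμ hR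
  let W : ℝ → ℂ := fun φ => ω * Complex.exp (-(Complex.I * φ))
  let F : ℝ → ℂ := fun φ => Complex.exp (-(Complex.I * φ) * (μ / ρ)) * rayIntegral ρ μ R (W φ)
  let F' : ℝ → ℂ := fun φ => -(Complex.I / ρ) * Complex.exp (-(Complex.I * φ) * (μ / ρ)) *
    (((R ^ μ : ℝ) : ℂ) * Complex.exp (-W φ * ((R ^ ρ : ℝ) : ℂ)))
  have hρ' : (ρ : ℂ) ≠ 0 := by exact_mod_cast hρ.ne'
  have hF : ∀ φ, HasDerivAt F (F' φ) φ := by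
    intro φ
    have h0 : HasDerivAt (fun x : ℝ => -(Complex.I * (x : ℂ))) (-Complex.I) φ := by
      simpa using ((Complex.ofRealCLM.hasDerivAt (x := φ)).const_mul Complex.I).fun_neg
    have hW : HasDerivAt W (ω * (Complex.exp (-(Complex.I * φ)) * -Complex.I)) φ :=
      h0.cexp.const_mul _
    have h1 := ((h0.mul_const ((μ : ℂ) / ρ)).cexp).mul ((hD (W φ)).comp φ hW)
    refine h1.congr_deriv ?_
    simp only [F', ← hode, W, Function.comp]
    field_simp
    ring
  have hK : 0 < ω * R ^ ρ := by positivity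
  have hπ := Real.pi_pos
  -- The comparison function is an antiderivative of the Jordan bound
  -- `(1/ρ) R^μ exp(-ω R^ρ (1 - 2φ/π))`.
  have hB : ∀ φ : ℝ, HasDerivAt
      (fun φ : ℝ => R ^ μ / ρ * (Real.pi / (2 * (ω * R ^ ρ))) *
        Real.exp (-(ω * R ^ ρ) * (1 - 2 / Real.pi * φ)))
      (R ^ μ / ρ * Real.exp (-(ω * R ^ ρ) * (1 - 2 / Real.pi * φ))) φ := by
    intro φ
    have h := (((((hasDerivAt_id φ).const_mul (2 / Real.pi)).const_sub 1).const_mul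
      (-(ω * R ^ ρ))).exp).const_mul (R ^ μ / ρ * (Real.pi / (2 * (ω * R ^ ρ))))
    refine h.congr_deriv ?_
    simp only [id]
    field_simp
  have hmain := image_norm_le_of_norm_deriv_right_le_deriv_boundary
    (f := fun φ => F φ - F 0) (f' := F') (a := 0) (b := Real.pi / 2)
    (fun φ _ => ((hF φ).sub_const (F 0)).continuousAt.continuousWithinAt)
    (fun φ _ => ((hF φ).sub_const (F 0)).hasDerivWithinAt)
    (by rw [sub_self, norm_zero]; positivity) hB
    (by
      intro φ hφ
      have hj := Real.one_sub_mul_le_cos hφ.1 hφ.2.le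
      have e1 : ‖Complex.exp (-(Complex.I * φ) * (μ / ρ))‖ = 1 := by
        rw [show -(Complex.I * (φ : ℂ)) * (μ / ρ) = ((-(φ * (μ / ρ)) : ℝ) : ℂ) * Complex.I by
          push_cast; ring]
        exact Complex.norm_exp_ofReal_mul_I _
      have e2 : (-W φ * ((R ^ ρ : ℝ) : ℂ)).re = -(ω * R ^ ρ) * Real.cos φ := by
        have : (Complex.exp (-(Complex.I * φ))).re = Real.cos φ := by
          rw [Complex.exp_re]; simp
        rw [Complex.re_mul_ofReal, Complex.neg_re, Complex.re_ofReal_mul, this]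
        ring
      have e3 : ‖F' φ‖ = R ^ μ / ρ * Real.exp (-(ω * R ^ ρ) * Real.cos φ) := by
        simp only [F']
        rw [norm_mul, norm_mul, norm_mul, e1, Complex.norm_exp, e2, norm_neg, norm_div,
          Complex.norm_I, Complex.norm_real, Complex.norm_real, Real.norm_of_nonneg hρ.le,
          Real.norm_of_nonneg (Real.rpow_nonneg hR.le μ)]
        ring
      rw [e3]
      gcongr ?_ * Real.exp ?_
      nlinarith)
    (right_mem_Icc.2 (by positivity))
  have hW0 : W 0 = ω := by simp [W]
  have hW1 : W (Real.pi / 2) = -(Complex.I * ω) := by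
    simp only [W]
    rw [show -(Complex.I * ((Real.pi / 2 : ℝ) : ℂ)) = -(Real.pi / 2 * Complex.I) by
      push_cast; ring, Complex.exp_neg, Complex.exp_pi_div_two_mul_I, Complex.inv_I]
    ring
  have hF0 : F 0 = rayIntegral ρ μ R ω := by simp only [F]; rw [hW0]; simp
  have hF1 : F (Real.pi / 2) = Complex.exp (-(Complex.I * ((Real.pi * μ / (2 * ρ) : ℝ) : ℂ))) *
        rayIntegral ρ μ R (-(Complex.I * ω)) := by
    simp only [F]
    rw [hW1]
    congr 2
    push_cast
    field_simp
  rw [hF0, hF1] at hmain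
  refine hmain.trans (le_of_eq ?_)
  rw [show (1 - 2 / Real.pi * (Real.pi / 2) : ℝ) = 0 by field_simp; norm_num, mul_zero,
    Real.exp_zero, Real.rpow_sub hR]
  field_simp

lemma tendsto_rayIntegral_real {ρ μ ω : ℝ} (hρ : 0 < ρ) (hμ : 0 < μ) (hω : 0 < ω) :
    Tendsto (fun R => rayIntegral ρ μ R ω) atTop
      (𝓝 ((ω ^ (-(μ / ρ)) * (1 / ρ) * Real.Gamma (μ / ρ) : ℝ) : ℂ)) := by
  have h := intervalIntegral_tendsto_integral_Ioi 0
    (integrableOn_rpow_mul_exp_neg_mul_rpow (s := μ - 1) (by linarith) hρ hω) tendsto_id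
  rw [integral_rpow_mul_exp_neg_mul_rpow hρ (by linarith) hω, sub_add_cancel, neg_div] at h
  refine ((Complex.continuous_ofReal.tendsto _).comp h).congr fun R => ?_
  simp only [Function.comp, id, rayIntegral]
  rw [← intervalIntegral.integral_ofReal]
  simp only [Complex.ofReal_mul, Complex.ofReal_exp, Complex.ofReal_neg]


/-- for ρ ≥ 1, 0 < μ < ρ and ω > 0, the improper integral
lim_{R→∞} ∫_0^R t^{μ-1} e^{iωt^ρ} dt exists and equals (1/ρ)·Γ(μ/ρ)·e^{iπμ/(2ρ)}·ω^{-μ/ρ}. -/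
theorem stmt_4 (ρ μ ω : ℝ) (hρ : 1 ≤ ρ) (hμ0 : 0 < μ) (hμρ : μ < ρ) (hω : 0 < ω) :
    Filter.Tendsto
      (fun R : ℝ => ∫ t in (0:ℝ)..R,
        ((t ^ (μ - 1) : ℝ) : ℂ) * Complex.exp (Complex.I * (ω : ℂ) * ((t ^ ρ : ℝ) : ℂ)))
      Filter.atTop
      (nhds ((1 / (ρ : ℂ)) * ((Real.Gamma (μ / ρ) : ℝ) : ℂ)
        * Complex.exp (Complex.I * ((Real.pi * μ / (2 * ρ) : ℝ) : ℂ))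
        * ((ω ^ (-(μ / ρ)) : ℝ) : ℂ))) := by
  have hρ0 : 0 < ρ := by linarith
  set E : ℂ := Complex.I * ((Real.pi * μ / (2 * ρ) : ℝ) : ℂ) with hE
  have hsmall : Tendsto (fun R : ℝ => Real.pi / (2 * ρ * ω) * R ^ (μ - ρ)) atTop (𝓝 0) := by
    have h := (tendsto_rpow_neg_atTop (sub_pos.2 hμρ)).const_mul (Real.pi / (2 * ρ * ω))
    simpa only [neg_sub, mul_zero] using h
  have hdiff := squeeze_zero_norm' ((eventually_gt_atTop (0:ℝ)).mono fun R hR =>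
    norm_rotated_sub_le hρ0 hμ0 hω hR) hsmall
  have h := ((hdiff.add (tendsto_rayIntegral_real hρ0 hμ0 hω)).const_mul (Complex.exp E))
  have hEE : Complex.exp E * Complex.exp (-E) = 1 := by
    rw [← Complex.exp_add, add_neg_cancel, Complex.exp_zero]
  convert h using 1
  · funext R
    rw [sub_add_cancel, ← mul_assoc, hEE, one_mul, rayIntegral, neg_neg]
  · congr 1
    rw [zero_add]
    push_cast
    ring
end

section
/- Let ρ ≥ 1, 0 < μ ≤ 1 with μ < ρ, let s > 0, ω > 0 and set θ := π/(2ρ). Then both integrals below converge absolutely and one has the identity e^{iθ} ∫_0^∞ (s + t e^{iθ})^{μ-1} exp(i ω (s + t e^{iθ})^ρ) dt = -(i ω ρ)^{-1} s^{μ-ρ} exp(i ω s^ρ) - ((μ-ρ)/(i ω ρ)) · e^{iθ} ∫_0^∞ (s + t e^{iθ})^{μ-ρ-1} exp(i ω (s + t e^{iθ})^ρ) dt. -/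
/-!
Along the ray `z t = s + t e^{iθ}`, `θ = π / (2ρ)`, `t ≥ 0`, the point `z t` has modulus at least
`s` and argument `φ ∈ [0, θ]`, so that `φ ≤ ρφ ≤ π / 2` and
`Im (z ^ ρ) = |z| ^ ρ sin (ρφ) ≥ |z| ^ (ρ - 1) · |z| sin φ ≥ s ^ (ρ - 1) · t sin θ`
(`im_cpow_ge`). Hence for a real exponent `a ≤ 0` the function `z ^ a * exp (iω z ^ ρ)` is bounded
by `s ^ a * exp (-c t)` with `c = ω s ^ (ρ - 1) sin θ > 0` (`norm_integrand_le`). This gives both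
absolute convergence and decay at infinity of the antiderivative `z ^ (μ - ρ) * exp (iω z ^ ρ)`,
whose derivative in `t` is
`e^{iθ} ((μ - ρ) z ^ (μ - ρ - 1) + iωρ z ^ (μ - 1)) exp (iω z ^ ρ)` (`hasDerivAt_antideriv`).
The fundamental theorem of calculus on `(0, ∞)` then yields the identity.
-/

open MeasureTheory

namespace RayIntegral

/-- The point `s + t e^{iθ}` of the ray from `s` in direction `θ`. -/
noncomputable def ray (s θ t : ℝ) : ℂ := (s : ℂ) + (t : ℂ) * Complex.exp ((θ : ℂ) * Complex.I)

lemma ray_re (s θ t : ℝ) : (ray s θ t).re = s + t * Real.cos θ := by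
  simp [ray, Complex.exp_ofReal_mul_I_re]

lemma ray_im (s θ t : ℝ) : (ray s θ t).im = t * Real.sin θ := by
  simp [ray, Complex.exp_ofReal_mul_I_im]

lemma le_ray_re {s θ t : ℝ} (h0 : 0 < θ) (h1 : θ ≤ Real.pi / 2) (ht : 0 ≤ t) :
    s ≤ (ray s θ t).re := by
  rw [ray_re]
  have := Real.cos_nonneg_of_mem_Icc (x := θ) ⟨by linarith, h1⟩
  nlinarith [mul_nonneg ht this]

lemma le_norm_ray {s θ t : ℝ} (h0 : 0 < θ) (h1 : θ ≤ Real.pi / 2) (ht : 0 ≤ t) :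
    s ≤ ‖ray s θ t‖ :=
  (le_ray_re h0 h1 ht).trans (Complex.re_le_norm _)

lemma sin_dir_pos {θ : ℝ} (h0 : 0 < θ) (h1 : θ ≤ Real.pi / 2) : 0 < Real.sin θ :=
  Real.sin_pos_of_pos_of_lt_pi h0 (by linarith [Real.pi_pos])

lemma arg_ray_nonneg {s θ t : ℝ} (h0 : 0 < θ) (h1 : θ ≤ Real.pi / 2) (ht : 0 ≤ t) :
    0 ≤ (ray s θ t).arg := by
  rw [Complex.arg_nonneg_iff, ray_im]
  exact mul_nonneg ht (sin_dir_pos h0 h1).le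

/-- If `arg z > θ`, then `|z| sin (arg z - θ) > 0`; but this quantity equals `-s sin θ`. -/
lemma arg_ray_le {s θ t : ℝ} (hs : 0 < s) (h0 : 0 < θ) (h1 : θ ≤ Real.pi / 2) (ht : 0 ≤ t) :
    (ray s θ t).arg ≤ θ := by
  by_contra! hlt
  have hre : 0 ≤ (ray s θ t).re := hs.le.trans (le_ray_re h0 h1 ht)
  have harg := (abs_le.1 (Complex.abs_arg_le_pi_div_two_iff.2 hre)).2
  have hnorm : 0 < ‖ray s θ t‖ := hs.trans_le (le_norm_ray h0 h1 ht)
  have hsin : 0 < Real.sin ((ray s θ t).arg - θ) :=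
    Real.sin_pos_of_pos_of_lt_pi (by linarith) (by linarith [Real.pi_pos])
  have hpos := mul_pos hnorm hsin
  have key : ‖ray s θ t‖ * Real.sin ((ray s θ t).arg - θ) = -(s * Real.sin θ) := by
    rw [Real.sin_sub, mul_sub, ← mul_assoc, ← mul_assoc, Complex.norm_mul_sin_arg,
      Complex.norm_mul_cos_arg, ray_re, ray_im]
    ring
  linarith [mul_pos hs (sin_dir_pos h0 h1)]

/-- The imaginary part of `z ^ ρ` grows at least linearly along the ray. -/
lemma im_cpow_ge {ρ s θ t : ℝ} (hρ : 1 ≤ ρ) (hs : 0 < s) (h0 : 0 < θ)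
    (hθ : θ * ρ = Real.pi / 2) (ht : 0 ≤ t) :
    s ^ (ρ - 1) * Real.sin θ * t ≤ ((ray s θ t) ^ (ρ : ℂ)).im := by
  have h1 : θ ≤ Real.pi / 2 := by nlinarith
  have ha0 := arg_ray_nonneg (s := s) h0 h1 ht
  have ha1 := arg_ray_le hs h0 h1 ht
  have hle := le_norm_ray (s := s) h0 h1 ht
  have hnorm : 0 < ‖ray s θ t‖ := hs.trans_le hle
  have hsin : Real.sin (ray s θ t).arg ≤ Real.sin ((ray s θ t).arg * ρ) :=
    Real.sin_le_sin_of_le_of_le_pi_div_two (by linarith [Real.pi_pos]) (by nlinarith)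
      (by nlinarith)
  have hpow : s ^ (ρ - 1) ≤ ‖ray s θ t‖ ^ (ρ - 1) :=
    Real.rpow_le_rpow hs.le hle (by linarith)
  rw [Complex.cpow_ofReal_im]
  calc s ^ (ρ - 1) * Real.sin θ * t
      = s ^ (ρ - 1) * (t * Real.sin θ) := by ring
    _ ≤ ‖ray s θ t‖ ^ (ρ - 1) * (t * Real.sin θ) :=
        mul_le_mul_of_nonneg_right hpow (mul_nonneg ht (sin_dir_pos h0 h1).le)
    _ = ‖ray s θ t‖ ^ (ρ - 1) * (‖ray s θ t‖ * Real.sin (ray s θ t).arg) := by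
        rw [Complex.norm_mul_sin_arg, ray_im]
    _ = ‖ray s θ t‖ ^ ρ * Real.sin (ray s θ t).arg := by
        rw [← mul_assoc, ← Real.rpow_add_one hnorm.ne', sub_add_cancel]
    _ ≤ ‖ray s θ t‖ ^ ρ * Real.sin ((ray s θ t).arg * ρ) :=
        mul_le_mul_of_nonneg_left hsin (by positivity)

lemma norm_integrand_le {ρ s θ t ω a : ℝ} (hρ : 1 ≤ ρ) (hs : 0 < s) (h0 : 0 < θ)
    (hθ : θ * ρ = Real.pi / 2) (hω : 0 < ω) (ha : a ≤ 0) (ht : 0 ≤ t) :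
    ‖(ray s θ t) ^ (a : ℂ) * Complex.exp (Complex.I * (ω : ℂ) * (ray s θ t) ^ (ρ : ℂ))‖
      ≤ s ^ a * Real.exp (-(ω * (s ^ (ρ - 1) * Real.sin θ)) * t) := by
  have h1 : θ ≤ Real.pi / 2 := by nlinarith
  have hle := le_norm_ray (s := s) h0 h1 ht
  have hnorm : 0 < ‖ray s θ t‖ := hs.trans_le hle
  rw [norm_mul, Complex.norm_exp, Complex.norm_cpow_real]
  refine mul_le_mul (Real.rpow_le_rpow_of_nonpos hs hle ha) (Real.exp_le_exp.2 ?_)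
    (Real.exp_pos _).le (by positivity)
  have him := mul_le_mul_of_nonneg_left (im_cpow_ge hρ hs h0 hθ ht) hω.le
  have hre : (Complex.I * (ω : ℂ) * (ray s θ t) ^ (ρ : ℂ)).re
      = -(ω * ((ray s θ t) ^ (ρ : ℂ)).im) := by
    simp [Complex.mul_re]
  rw [hre]
  linarith

lemma ray_mem_slitPlane {s θ t : ℝ} (hs : 0 < s) (h0 : 0 < θ) (h1 : θ ≤ Real.pi / 2)
    (ht : 0 ≤ t) : ray s θ t ∈ Complex.slitPlane :=
  Or.inl (hs.trans_le (le_ray_re h0 h1 ht))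

lemma hasDerivAt_ray (s θ t : ℝ) :
    HasDerivAt (ray s θ) (Complex.exp ((θ : ℂ) * Complex.I)) t := by
  have := ((Complex.ofRealCLM.hasDerivAt (x := t)).mul_const
    (Complex.exp ((θ : ℂ) * Complex.I))).const_add (s : ℂ)
  rw [Complex.ofRealCLM_apply, Complex.ofReal_one, one_mul] at this
  exact this

lemma hasDerivAt_cpow_ray {s θ t : ℝ} (a : ℂ) (hs : 0 < s) (h0 : 0 < θ) (h1 : θ ≤ Real.pi / 2)
    (ht : 0 ≤ t) :
    HasDerivAt (fun u => (ray s θ u) ^ a)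
      (a * (ray s θ t) ^ (a - 1) * Complex.exp ((θ : ℂ) * Complex.I)) t := by
  have hd : HasDerivAt (fun w : ℂ => w ^ a) (a * (ray s θ t) ^ (a - 1) * 1) (ray s θ t) :=
    (hasDerivAt_id (ray s θ t)).cpow_const (ray_mem_slitPlane hs h0 h1 ht)
  rw [mul_one] at hd
  exact hd.comp t (hasDerivAt_ray s θ t)

lemma hasDerivAt_integrand {ρ s θ t ω : ℝ} (a : ℂ) (hs : 0 < s) (h0 : 0 < θ)
    (h1 : θ ≤ Real.pi / 2) (ht : 0 ≤ t) :
    HasDerivAt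
      (fun u => (ray s θ u) ^ a * Complex.exp (Complex.I * (ω : ℂ) * (ray s θ u) ^ (ρ : ℂ)))
      (a * (ray s θ t) ^ (a - 1) * Complex.exp ((θ : ℂ) * Complex.I)
          * Complex.exp (Complex.I * (ω : ℂ) * (ray s θ t) ^ (ρ : ℂ))
        + (ray s θ t) ^ a * (Complex.exp (Complex.I * (ω : ℂ) * (ray s θ t) ^ (ρ : ℂ))
          * (Complex.I * (ω : ℂ) * ((ρ : ℂ) * (ray s θ t) ^ ((ρ : ℂ) - 1)
            * Complex.exp ((θ : ℂ) * Complex.I))))) t :=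
  (hasDerivAt_cpow_ray a hs h0 h1 ht).mul
    ((hasDerivAt_cpow_ray (ρ : ℂ) hs h0 h1 ht).const_mul _).cexp

lemma hasDerivAt_antideriv {ρ μ s θ t ω : ℝ} (hs : 0 < s) (h0 : 0 < θ)
    (h1 : θ ≤ Real.pi / 2) (ht : 0 ≤ t) :
    HasDerivAt
      (fun u => (ray s θ u) ^ ((μ : ℂ) - ρ)
        * Complex.exp (Complex.I * (ω : ℂ) * (ray s θ u) ^ (ρ : ℂ)))
      (((μ : ℂ) - ρ) * Complex.exp ((θ : ℂ) * Complex.I) * ((ray s θ t) ^ ((μ : ℂ) - ρ - 1)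
          * Complex.exp (Complex.I * (ω : ℂ) * (ray s θ t) ^ (ρ : ℂ)))
        + Complex.I * (ω : ℂ) * (ρ : ℂ) * Complex.exp ((θ : ℂ) * Complex.I)
          * ((ray s θ t) ^ ((μ : ℂ) - 1)
            * Complex.exp (Complex.I * (ω : ℂ) * (ray s θ t) ^ (ρ : ℂ)))) t := by
  convert hasDerivAt_integrand (ρ := ρ) (ω := ω) ((μ : ℂ) - ρ) hs h0 h1 ht using 1
  have hne := Complex.slitPlane_ne_zero (ray_mem_slitPlane hs h0 h1 ht)
  have hadd : (ray s θ t) ^ ((μ : ℂ) - 1)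
      = (ray s θ t) ^ ((μ : ℂ) - ρ) * (ray s θ t) ^ ((ρ : ℂ) - 1) := by
    rw [← Complex.cpow_add _ _ hne]
    congr 1
    ring
  rw [hadd]
  ring

lemma integrableOn_integrand {ρ s θ ω a : ℝ} (hρ : 1 ≤ ρ) (hs : 0 < s) (h0 : 0 < θ)
    (hθ : θ * ρ = Real.pi / 2) (hω : 0 < ω) (ha : a ≤ 0) :
    IntegrableOn (fun t : ℝ => (ray s θ t) ^ (a : ℂ)
      * Complex.exp (Complex.I * (ω : ℂ) * (ray s θ t) ^ (ρ : ℂ))) (Set.Ioi 0) := by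
  have h1 : θ ≤ Real.pi / 2 := by nlinarith
  have hc : 0 < ω * (s ^ (ρ - 1) * Real.sin θ) :=
    mul_pos hω (mul_pos (Real.rpow_pos_of_pos hs _) (sin_dir_pos h0 h1))
  refine Integrable.mono' ((integrableOn_exp_mul_Ioi (neg_lt_zero.2 hc) 0).const_mul (s ^ a))
    (ContinuousOn.aestronglyMeasurable (fun t ht => ?_) measurableSet_Ioi) ?_
  · exact (hasDerivAt_integrand (a : ℂ) hs h0 h1
      (le_of_lt ht)).continuousAt.continuousWithinAt
  · filter_upwards [ae_restrict_mem measurableSet_Ioi] with t ht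
    exact norm_integrand_le hρ hs h0 hθ hω ha (le_of_lt ht)

lemma tendsto_integrand {ρ s θ ω a : ℝ} (hρ : 1 ≤ ρ) (hs : 0 < s) (h0 : 0 < θ)
    (hθ : θ * ρ = Real.pi / 2) (hω : 0 < ω) (ha : a ≤ 0) :
    Filter.Tendsto (fun t : ℝ => (ray s θ t) ^ (a : ℂ)
      * Complex.exp (Complex.I * (ω : ℂ) * (ray s θ t) ^ (ρ : ℂ))) Filter.atTop (nhds 0) := by
  have h1 : θ ≤ Real.pi / 2 := by nlinarith
  have hc : 0 < ω * (s ^ (ρ - 1) * Real.sin θ) :=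
    mul_pos hω (mul_pos (Real.rpow_pos_of_pos hs _) (sin_dir_pos h0 h1))
  refine squeeze_zero_norm' (a := fun t : ℝ =>
    s ^ a * Real.exp (-(ω * (s ^ (ρ - 1) * Real.sin θ)) * t)) ?_ ?_
  · filter_upwards [Filter.eventually_ge_atTop 0] with t ht
    exact norm_integrand_le hρ hs h0 hθ hω ha ht
  · have := (Real.tendsto_exp_atBot.comp
      (Filter.tendsto_id.const_mul_atTop_of_neg (neg_lt_zero.2 hc))).const_mul (s ^ a)
    simpa using this

end RayIntegral

open RayIntegral in
/-- for ρ ≥ 1, 0 < μ ≤ 1 with μ < ρ, s > 0, ω > 0 and θ := π/(2ρ), both ray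
integrals converge absolutely and
e^{iθ}∫_0^∞ (s+te^{iθ})^{μ-1} e^{iω(s+te^{iθ})^ρ} dt
  = -(iωρ)^{-1} s^{μ-ρ} e^{iωs^ρ} - ((μ-ρ)/(iωρ)) e^{iθ}∫_0^∞ (s+te^{iθ})^{μ-ρ-1} e^{iω(s+te^{iθ})^ρ} dt. -/
theorem stmt_5 (ρ μ s ω : ℝ) (hρ : 1 ≤ ρ) (hμ0 : 0 < μ) (hμ1 : μ ≤ 1) (hμρ : μ < ρ)
    (hs : 0 < s) (hω : 0 < ω) :
    let E : ℂ := Complex.exp (((Real.pi / (2 * ρ) : ℝ) : ℂ) * Complex.I)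
    let z : ℝ → ℂ := fun t => (s : ℂ) + (t : ℂ) * E
    MeasureTheory.IntegrableOn
      (fun t : ℝ => (z t) ^ ((μ : ℂ) - 1) * Complex.exp (Complex.I * (ω : ℂ) * (z t) ^ (ρ : ℂ)))
      (Set.Ioi 0) ∧
    MeasureTheory.IntegrableOn
      (fun t : ℝ => (z t) ^ ((μ : ℂ) - (ρ : ℂ) - 1)
        * Complex.exp (Complex.I * (ω : ℂ) * (z t) ^ (ρ : ℂ)))
      (Set.Ioi 0) ∧
    E * (∫ t in Set.Ioi (0 : ℝ),
        (z t) ^ ((μ : ℂ) - 1) * Complex.exp (Complex.I * (ω : ℂ) * (z t) ^ (ρ : ℂ)))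
      = -(Complex.I * (ω : ℂ) * (ρ : ℂ))⁻¹ * ((s ^ (μ - ρ) : ℝ) : ℂ)
          * Complex.exp (Complex.I * (ω : ℂ) * ((s ^ ρ : ℝ) : ℂ))
        - (((μ : ℂ) - (ρ : ℂ)) / (Complex.I * (ω : ℂ) * (ρ : ℂ))) * E
          * (∫ t in Set.Ioi (0 : ℝ),
              (z t) ^ ((μ : ℂ) - (ρ : ℂ) - 1)
                * Complex.exp (Complex.I * (ω : ℂ) * (z t) ^ (ρ : ℂ))) := by
  intro E z
  have hρ0 : 0 < ρ := by linarith
  set θ : ℝ := Real.pi / (2 * ρ) with hθdef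
  have h0 : 0 < θ := by positivity
  have hθ : θ * ρ = Real.pi / 2 := by rw [hθdef]; field_simp
  have h1 : θ ≤ Real.pi / 2 := by nlinarith
  have hz : z = ray s θ := rfl
  have hI1 := integrableOn_integrand hρ hs h0 hθ hω (a := μ - 1) (by linarith)
  have hI2 := integrableOn_integrand hρ hs h0 hθ hω (a := μ - ρ - 1) (by linarith)
  have hlim := tendsto_integrand hρ hs h0 hθ hω (a := μ - ρ) (by linarith)
  push_cast at hI1 hI2 hlim
  rw [hz]
  refine ⟨hI1, hI2, ?_⟩
  have hFTC := integral_Ioi_of_hasDerivAt_of_tendsto'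
    (fun t (ht : t ∈ Set.Ici (0 : ℝ)) =>
      hasDerivAt_antideriv (ρ := ρ) (μ := μ) (ω := ω) hs h0 h1 ht)
    ((hI2.const_mul (((μ : ℂ) - ρ) * E)).add
      (hI1.const_mul (Complex.I * (ω : ℂ) * (ρ : ℂ) * E))) hlim
  have hray0 : ray s θ 0 = (s : ℂ) := by simp [ray]
  rw [integral_add (hI2.const_mul (((μ : ℂ) - ρ) * E))
      (hI1.const_mul (Complex.I * (ω : ℂ) * (ρ : ℂ) * E)),
    integral_const_mul, integral_const_mul, hray0, zero_sub] at hFTC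
  rw [Complex.ofReal_cpow hs.le, Complex.ofReal_cpow hs.le]
  push_cast
  have hK : Complex.I * (ω : ℂ) * (ρ : ℂ) ≠ 0 := by
    simp [Complex.I_ne_zero, hω.ne', hρ0.ne']
  have hKK := mul_inv_cancel₀ hK
  refine mul_left_cancel₀ hK ?_
  generalize (∫ t in Set.Ioi (0 : ℝ), ray s θ t ^ ((μ : ℂ) - ρ - 1)
    * Complex.exp (Complex.I * (ω : ℂ) * ray s θ t ^ (ρ : ℂ))) = J at hFTC ⊢
  linear_combination hFTC
    + ((s : ℂ) ^ ((μ : ℂ) - ρ) * Complex.exp (Complex.I * (ω : ℂ) * (s : ℂ) ^ (ρ : ℂ))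
      + ((μ : ℂ) - ρ) * E * J) * hKK
end
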